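/- arXiv:1605.05721 — 2 statements merged into one kernel-verified Lean document; each statement's English description precedes it below -/
import Mathlib

section
/- Fix real numbers μ, λ ≠ 0, and t < 0. For each positive integer k, let X_k be a normal random variable with mean μ and variance λ²/k. Then k · Var(e^{t X_k²}) → 4 μ² λ² t² e^{2μ²t} as k → ∞, where Var(e^{t X_k²}) = (1 − 4λ²t/k)^{−1/2} exp(2μ²t/(1 − 4λ²t/k)) − (1 − 2λ²t/k)^{−1} exp(2μ²t/(1 − 2λ²t/k)). -/
open MeasureTheory ProbabilityTheory Real Filter Topology

/-!
Completing the square turns the density of `N(μ, v)` times `exp (s x²)` into a multiple of the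
density of `N(μ / D, v / D)`, where `D = 1 - 2vs`; the constant is the moment generating function of
`X²`. The variance of `exp (t X²)` is then an explicit function of `v` which vanishes at `v = 0`,
and `k · Var` at `v = λ² / k` is a difference quotient of it, so the limit is `λ²` times its
derivative at `0`.
-/

open scoped NNReal

theorem gaussianPDFReal_mul_exp_mul_sq (μ : ℝ) {v : ℝ≥0} (hv : v ≠ 0) {s : ℝ} (hs : 2 * v * s < 1)
    (x : ℝ) :
    gaussianPDFReal μ v x * exp (s * x ^ 2) =
      ((1 - 2 * v * s) ^ (-1 / 2 : ℝ) * exp (μ ^ 2 * s / (1 - 2 * v * s))) *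
        gaussianPDFReal (μ / (1 - 2 * v * s)) (v / (1 - 2 * v * s).toNNReal) x := by
  have hv' : (v : ℝ) ≠ 0 := NNReal.coe_ne_zero.mpr hv
  obtain ⟨D, hD⟩ : ∃ D : ℝ, D = 1 - 2 * v * s := ⟨_, rfl⟩
  have hD_pos : 0 < D := by linarith
  have normalization : (√(2 * π * v))⁻¹ = D ^ (-1 / 2 : ℝ) * (√(2 * π * (v / D)))⁻¹ := by
    rw [neg_div, rpow_neg hD_pos.le, ← sqrt_eq_rpow, ← mul_inv, ← sqrt_mul hD_pos.le]
    field_simp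
  have complete_square : -(x - μ) ^ 2 / (2 * v) + s * x ^ 2 =
      μ ^ 2 * s / D + -(x - μ / D) ^ 2 / (2 * (v / D)) := by
    have hs_eq : s = (1 - D) / (2 * v) := by rw [hD]; field_simp; ring
    rw [hs_eq]
    field_simp
    ring
  rw [← hD, gaussianPDFReal, gaussianPDFReal, NNReal.coe_div, coe_toNNReal D hD_pos.le,
    normalization, mul_assoc, ← exp_add, complete_square, exp_add]
  ring

theorem mgf_sq_gaussianReal (μ : ℝ) {v : ℝ≥0} {s : ℝ} (hs : 2 * v * s < 1) :
    mgf (fun x ↦ x ^ 2) (gaussianReal μ v) s =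
      (1 - 2 * v * s) ^ (-1 / 2 : ℝ) * exp (μ ^ 2 * s / (1 - 2 * v * s)) := by
  rcases eq_or_ne v 0 with rfl | hv
  · simp [mgf, mul_comm]
  · have hw : v / (1 - 2 * v * s).toNNReal ≠ 0 :=
      div_ne_zero hv (toNNReal_pos.mpr (by linarith)).ne'
    simp only [mgf, integral_gaussianReal_eq_integral_smul hv, smul_eq_mul,
      gaussianPDFReal_mul_exp_mul_sq μ hv hs]
    rw [integral_const_mul, integral_gaussianPDFReal_eq_one _ hw, mul_one]

theorem integral_exp_mul_sq_eq_mgf {Ω : Type*} [MeasurableSpace Ω] (X : Ω → ℝ) (P : Measure Ω)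
    (t : ℝ) : ∫ ω, exp (t * X ω) ^ 2 ∂P = mgf X P (2 * t) := by
  simp only [mgf, ← exp_nat_mul, Nat.cast_ofNat, mul_assoc]

/-- The variance of `exp (t X²)` for `X ∼ N(μ, v)`, in closed form when `4 * v * t < 1`. The
variance parameter `v` is a real number so that the function can be differentiated at `v = 0`. -/
noncomputable def expSqVariance (μ t v : ℝ) : ℝ :=
  (1 - 4 * v * t) ^ (-1 / 2 : ℝ) * exp (2 * μ ^ 2 * t / (1 - 4 * v * t)) -
    (1 - 2 * v * t)⁻¹ * exp (2 * μ ^ 2 * t / (1 - 2 * v * t))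

theorem integral_sq_sub_sq_integral_exp_mul_sq_gaussianReal (μ : ℝ) {t : ℝ} {v : ℝ≥0}
    (h : 4 * v * t < 1) :
    (∫ x, exp (t * x ^ 2) ^ 2 ∂gaussianReal μ v) - (∫ x, exp (t * x ^ 2) ∂gaussianReal μ v) ^ 2 =
      expSqVariance μ t v := by
  have h_nonneg : 0 ≤ 1 - 2 * v * t := by linarith
  have second_moment : ∫ x, exp (t * x ^ 2) ^ 2 ∂gaussianReal μ v =
      (1 - 4 * v * t) ^ (-1 / 2 : ℝ) * exp (2 * μ ^ 2 * t / (1 - 4 * v * t)) := by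
    rw [integral_exp_mul_sq_eq_mgf (fun x ↦ x ^ 2), mgf_sq_gaussianReal μ (by linarith)]
    ring_nf
  have sq_mean : (∫ x, exp (t * x ^ 2) ∂gaussianReal μ v) ^ 2 =
      (1 - 2 * v * t)⁻¹ * exp (2 * μ ^ 2 * t / (1 - 2 * v * t)) := by
    change mgf (fun x ↦ x ^ 2) (gaussianReal μ v) t ^ 2 = _
    rw [mgf_sq_gaussianReal μ (by linarith), mul_pow, ← rpow_mul_natCast h_nonneg, ← exp_nat_mul,
      Nat.cast_ofNat, div_mul_cancel₀ _ two_ne_zero, rpow_neg_one, mul_div_assoc', ← mul_assoc]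
  rw [second_moment, sq_mean, expSqVariance]

theorem hasDerivAt_rpow_mul_exp_div (p a : ℝ) {x : ℝ} (hx : x ≠ 0) :
    HasDerivAt (fun y ↦ y ^ p * exp (a / y))
      ((p * x ^ (p - 1) - x ^ p * (a / x ^ 2)) * exp (a / x)) x := by
  have hexp : HasDerivAt (fun y ↦ exp (a / y)) (exp (a / x) * (-a / x ^ 2)) x := by
    simpa using ((hasDerivAt_const x a).div (hasDerivAt_id x) hx).exp
  refine ((hasDerivAt_rpow_const (Or.inl hx)).mul hexp).congr_deriv ?_
  ring

theorem expSqVariance_zero (μ t : ℝ) : expSqVariance μ t 0 = 0 := by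
  simp [expSqVariance]

theorem hasDerivAt_expSqVariance_zero (μ t : ℝ) :
    HasDerivAt (expSqVariance μ t) (4 * μ ^ 2 * t ^ 2 * exp (2 * μ ^ 2 * t)) 0 := by
  have term (c p : ℝ) : HasDerivAt
      (fun v ↦ (1 - c * v * t) ^ p * exp (2 * μ ^ 2 * t / (1 - c * v * t)))
      ((p - 2 * μ ^ 2 * t) * exp (2 * μ ^ 2 * t) * -(c * t)) 0 := by
    have inner : HasDerivAt (fun v ↦ 1 - c * v * t) (-(c * t)) 0 := by
      simpa using (((hasDerivAt_id (0 : ℝ)).const_mul c).mul_const t).const_sub 1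
    have outer := hasDerivAt_rpow_mul_exp_div p (2 * μ ^ 2 * t) one_ne_zero
    simp only [one_rpow, one_pow, div_one, mul_one, one_mul] at outer
    exact outer.comp_of_eq 0 inner (by simp)
  have h := (term 4 (-1 / 2)).sub (term 2 (-1))
  simp only [rpow_neg_one] at h
  refine h.congr_deriv ?_
  ring

theorem tendsto_natCast_mul_expSqVariance_div (μ t c : ℝ) :
    Tendsto (fun k : ℕ ↦ (k : ℝ) * expSqVariance μ t (c / k)) atTop
      (𝓝 (c * (4 * μ ^ 2 * t ^ 2 * exp (2 * μ ^ 2 * t)))) := by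
  have h := ((hasDerivAt_expSqVariance_zero μ t).hasFDerivAt.lim_real c).comp
    tendsto_natCast_atTop_atTop
  simpa [Function.comp_def, expSqVariance_zero, div_eq_inv_mul] using h

theorem stmt_17_general (μ lam t : ℝ) (V : ℕ → ℝ)
    (hV : ∀ k : ℕ, 1 ≤ k →
      V k = (∫ x, Real.exp (t * x ^ 2) ^ 2 ∂(gaussianReal μ (Real.toNNReal (lam ^ 2 / k))))
        - (∫ x, Real.exp (t * x ^ 2) ∂(gaussianReal μ (Real.toNNReal (lam ^ 2 / k)))) ^ 2) :
    (∀ k : ℕ, 1 ≤ k → 4 * lam ^ 2 * t < k →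
      V k = (1 - 4 * lam ^ 2 * t / k) ^ (-(1 : ℝ) / 2)
              * Real.exp (2 * μ ^ 2 * t / (1 - 4 * lam ^ 2 * t / k))
            - (1 - 2 * lam ^ 2 * t / k)⁻¹
              * Real.exp (2 * μ ^ 2 * t / (1 - 2 * lam ^ 2 * t / k))) ∧
    Tendsto (fun k : ℕ => (k : ℝ) * V k) atTop
      (𝓝 (4 * μ ^ 2 * lam ^ 2 * t ^ 2 * Real.exp (2 * μ ^ 2 * t))) := by
  have closed_form (k : ℕ) (hk : 1 ≤ k) (hlt : 4 * lam ^ 2 * t < k) :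
      V k = expSqVariance μ t (lam ^ 2 / k) := by
    have hk_pos : (0 : ℝ) < k := by exact_mod_cast hk
    have hv : ((lam ^ 2 / k).toNNReal : ℝ) = lam ^ 2 / k := coe_toNNReal _ (by positivity)
    have hvt : 4 * (lam ^ 2 / k) * t < 1 := by
      rwa [mul_div_assoc', div_mul_eq_mul_div, div_lt_one hk_pos]
    rw [hV k hk, integral_sq_sub_sq_integral_exp_mul_sq_gaussianReal μ (by rwa [hv]), hv]
  refine ⟨fun k hk hlt ↦ ?_, ?_⟩
  · rw [closed_form k hk hlt, expSqVariance]
    simp only [mul_div_assoc', div_mul_eq_mul_div]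
  · rw [show 4 * μ ^ 2 * lam ^ 2 * t ^ 2 * exp (2 * μ ^ 2 * t) =
      lam ^ 2 * (4 * μ ^ 2 * t ^ 2 * exp (2 * μ ^ 2 * t)) by ring]
    refine (tendsto_natCast_mul_expSqVariance_div μ t (lam ^ 2)).congr' ?_
    filter_upwards [eventually_ge_atTop 1,
      tendsto_natCast_atTop_atTop.eventually_gt_atTop (4 * lam ^ 2 * t)] with k hk hlt
    rw [closed_form k hk hlt]

/-- **Asymptotic variance in Theorem 4.** For `μ, λ ≠ 0, t < 0` and `X_k ~ N(μ, λ²/k)`,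
the variance of `e^{t X_k²}` equals the stated closed form, and
`k · Var(e^{t X_k²}) → 4 μ² λ² t² e^{2μ²t}` as `k → ∞`. -/
theorem stmt_17 (μ lam t : ℝ) (hlam : lam ≠ 0) (ht : t < 0)
    (V : ℕ → ℝ)
    (hV : ∀ k : ℕ, 1 ≤ k →
      V k = (∫ x, Real.exp (t * x ^ 2) ^ 2 ∂(gaussianReal μ (Real.toNNReal (lam ^ 2 / k))))
        - (∫ x, Real.exp (t * x ^ 2) ∂(gaussianReal μ (Real.toNNReal (lam ^ 2 / k)))) ^ 2) :
    (∀ k : ℕ, 1 ≤ k →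
      V k = (1 - 4 * lam ^ 2 * t / k) ^ (-(1 : ℝ) / 2)
              * Real.exp (2 * μ ^ 2 * t / (1 - 4 * lam ^ 2 * t / k))
            - (1 - 2 * lam ^ 2 * t / k)⁻¹
              * Real.exp (2 * μ ^ 2 * t / (1 - 2 * lam ^ 2 * t / k))) ∧
    Tendsto (fun k : ℕ => (k : ℝ) * V k) atTop
      (𝓝 (4 * μ ^ 2 * lam ^ 2 * t ^ 2 * Real.exp (2 * μ ^ 2 * t))) := by
  obtain ⟨closed_form, limit⟩ := stmt_17_general μ lam t V hV
  exact ⟨fun k hk ↦ closed_form k hk <|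
    (mul_nonpos_of_nonneg_of_nonpos (by positivity) ht.le).trans_lt (by positivity), limit⟩
end

section
/- Let ρ ∈ (−1, 1), γ > 0, and g = (1 − √((1−ρ)/2)) / (1 + √((1−ρ)/2)). For each positive integer k, let S_k be a binomial(k, g) random variable and let X̄_k = S_k/k. With f(x) = exp(−2γ((1−x)/(1+x))²), as k → ∞: E[f(X̄_k)] → e^{−γ(1−ρ)}, and k · Var(f(X̄_k)) → V_{g,γ}, where V_{g,γ} = e^{−2γ(1−ρ)} · 64 γ² · g(1−g)³/(1+g)⁶. -/
open Filter Topology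

/-!
Write `f y = f x + (y - x) * q y` with `q` continuous and `q x = f' x`. For `Y = S/n`, with `S` a
binomial variable of success probability `x`, the variance of `f Y` is
`E[(Y - x)² q(Y)²] - E[(Y - x) q(Y)]²`. The weighted laws `n (y - x)² dP(y)` have mass `x (1 - x)`
and concentrate at `x`, because the fourth central moment of `Y` is `O(1/n²)`; so `n` times the
first term tends to `x (1 - x) f'(x)²`. As `E[Y - x] = 0`, `q` may be replaced by `q - q x` in the
second term, which Cauchy–Schwarz then bounds by `E[(Y - x)²] E[(q(Y) - q x)²] = o(1/n)`.
-/

section CentralMoments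

open Polynomial

variable {R : Type*} [CommRing R]

lemma X_mul_one_sub_X_mul_derivative_bernsteinPolynomial (n ν : ℕ) :
    X * (1 - X) * derivative (bernsteinPolynomial R n ν) =
      ((ν : R[X]) - (n : R[X]) * X) * bernsteinPolynomial R n ν := by
  have mul_derivative_pow (p : R[X]) (k : ℕ) :
      p * derivative (p ^ k) = k * p ^ k * derivative p := by
    cases k with
    | zero => simp
    | succ k => rw [derivative_pow_succ, map_add, map_natCast, map_one]; push_cast; ring
  rcases lt_or_ge n ν with hlt | hle
  · simp [bernsteinPolynomial.eq_zero_of_lt R hlt]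
  · obtain ⟨j, rfl⟩ := Nat.exists_eq_add_of_le hle
    have hX := mul_derivative_pow X ν
    have hY := mul_derivative_pow (1 - X) j
    simp only [derivative_sub, derivative_one, derivative_X] at hX hY
    simp only [bernsteinPolynomial, derivative_mul, derivative_natCast, Nat.add_sub_cancel_left,
      Nat.cast_add]
    linear_combination ((ν + j).choose ν : R[X]) * (1 - X) * (1 - X) ^ j * hX +
      ((ν + j).choose ν : R[X]) * X * X ^ ν * hY

variable (R) in
/-- The `m`-th central moment `E[(S - nX)ᵐ]` of a binomial variable `S` with `n` trials and success
probability `X`, as a polynomial in `X`. -/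
noncomputable def binomialCentralMoment (n m : ℕ) : R[X] :=
  ∑ ν ∈ Finset.range (n + 1), ((ν : R[X]) - (n : R[X]) * X) ^ m * bernsteinPolynomial R n ν

lemma binomialCentralMoment_zero (n : ℕ) : binomialCentralMoment R n 0 = 1 := by
  simp [binomialCentralMoment, bernsteinPolynomial.sum]

lemma binomialCentralMoment_succ (n m : ℕ) :
    binomialCentralMoment R n (m + 1) = X * (1 - X) *
      (derivative (binomialCentralMoment R n m) +
        (n * m : R[X]) * binomialCentralMoment R n (m - 1)) := by
  simp only [binomialCentralMoment, derivative_sum, Finset.mul_sum, ← Finset.sum_add_distrib]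
  refine Finset.sum_congr rfl fun ν _ ↦ ?_
  have hB := X_mul_one_sub_X_mul_derivative_bernsteinPolynomial (R := R) n ν
  have hpow : derivative (((ν : R[X]) - (n : R[X]) * X) ^ m) =
      -((n * m : R[X]) * ((ν : R[X]) - (n : R[X]) * X) ^ (m - 1)) := by
    simp only [derivative_pow, map_natCast, derivative_sub, derivative_natCast, derivative_mul,
      zero_mul, derivative_X, mul_one, zero_add, zero_sub, mul_neg, neg_inj]
    ring
  rw [derivative_mul, hpow]
  linear_combination -((ν : R[X]) - (n : R[X]) * X) ^ m * hB

lemma binomialCentralMoment_one (n : ℕ) : binomialCentralMoment R n 1 = 0 := by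
  simp [binomialCentralMoment_succ n 0, binomialCentralMoment_zero]

lemma binomialCentralMoment_two (n : ℕ) :
    binomialCentralMoment R n 2 = (n : R[X]) * (X * (1 - X)) := by
  simp only [binomialCentralMoment_succ n 1, binomialCentralMoment_one, derivative_zero,
    Nat.cast_one, mul_one, tsub_self, binomialCentralMoment_zero, zero_add]
  ring

lemma binomialCentralMoment_three (n : ℕ) :
    binomialCentralMoment R n 3 = (n : R[X]) * (X * (1 - X)) * (1 - 2 * X) := by
  simp only [binomialCentralMoment_succ n 2, binomialCentralMoment_two, derivative_mul,
    derivative_natCast, zero_mul, derivative_X, one_mul, derivative_sub, derivative_one, zero_sub,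
    mul_neg, mul_one, zero_add, Nat.cast_ofNat, Nat.add_one_sub_one, binomialCentralMoment_one,
    mul_zero, add_zero]
  ring

lemma binomialCentralMoment_four (n : ℕ) :
    binomialCentralMoment R n 4 =
      (n : R[X]) * (X * (1 - X)) * (1 + 3 * (n - 2 : R[X]) * (X * (1 - X))) := by
  simp only [binomialCentralMoment_succ n 3, binomialCentralMoment_three, derivative_mul,
    derivative_natCast, zero_mul, derivative_X, one_mul, derivative_sub, derivative_one, zero_sub,
    mul_neg, mul_one, zero_add, derivative_ofNat, Nat.cast_ofNat, Nat.add_one_sub_one,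
    binomialCentralMoment_two]
  ring

end CentralMoments

section PositiveFunctional

variable {X : Type*} [TopologicalSpace X]

lemma abs_positiveFunctional_le (φ : C(X, ℝ) →ₚ[ℝ] ℝ) {u w : C(X, ℝ)} (h : ∀ x, |u x| ≤ w x) :
    |φ u| ≤ φ w := by
  refine abs_le'.2 ⟨OrderHomClass.mono φ fun x ↦ (abs_le'.1 (h x)).1, ?_⟩
  rw [← map_neg]
  exact OrderHomClass.mono φ fun x ↦ (abs_le'.1 (h x)).2

lemma positiveFunctional_mul_sq_le (φ : C(X, ℝ) →ₚ[ℝ] ℝ) (f g : C(X, ℝ)) :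
    φ (f * g) ^ 2 ≤ φ (f ^ 2) * φ (g ^ 2) := by
  have hB := LinearMap.BilinForm.apply_sq_le_of_symm
    ((LinearMap.mul ℝ C(X, ℝ)).compr₂ φ.toLinearMap)
    (fun u ↦ φ.map_nonneg fun x ↦ mul_self_nonneg (u x)) ⟨fun u w ↦ by simp [mul_comm]⟩ f g
  simpa [sq] using hB

lemma exists_abs_sub_le_add_mul [CompactSpace X] {a : X} {d : C(X, ℝ)} (hd : 0 ≤ d)
    (hda : ∀ x, d x = 0 → x = a) (h : C(X, ℝ)) {ε : ℝ} (hε : 0 < ε) :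
    ∃ C, ∀ x, |h x - h a| ≤ ε + C * d x := by
  have hK : IsCompact {x | ε ≤ |h x - h a|} :=
    (isClosed_le continuous_const (by fun_prop)).isCompact
  have hd_pos : ∀ x ∈ {x | ε ≤ |h x - h a|}, 0 < d x := fun x hx ↦
    (hd x).lt_of_ne' fun h0 ↦ by
      obtain rfl := hda x h0
      simp only [Set.mem_ofPred_eq, sub_self, abs_zero] at hx
      exact hx.not_gt hε
  obtain ⟨C, hC⟩ := (hK.image_of_continuousOn (f := fun x ↦ |h x - h a| / d x)
    (ContinuousOn.div (by fun_prop) (by fun_prop) fun x hx ↦ (hd_pos x hx).ne')).bddAbove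
  refine ⟨max C 0, fun x ↦ ?_⟩
  have hCd : 0 ≤ max C 0 * d x := mul_nonneg (le_max_right _ _) (hd x)
  rcases le_or_gt ε |h x - h a| with hfar | hnear
  · have := (div_le_iff₀ (hd_pos x hfar)).1 ((hC ⟨x, hfar, rfl⟩).trans (le_max_left C 0))
    linarith
  · linarith

variable {ι : Type*} {l : Filter ι} {φ : ι → C(X, ℝ) →ₚ[ℝ] ℝ} {a : X} {d : C(X, ℝ)} {v : ℝ}

/-- The Bohman–Korovkin theorem at the single point `a`: `d` plays the role of `(y - a)²`. -/
theorem tendsto_positiveFunctional_of_korovkin [CompactSpace X] (hd : 0 ≤ d)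
    (hda : ∀ x, d x = 0 → x = a) (h_one : Tendsto (fun i ↦ φ i 1) l (𝓝 v))
    (h_d : Tendsto (fun i ↦ φ i d) l (𝓝 0)) (h : C(X, ℝ)) :
    Tendsto (fun i ↦ φ i h) l (𝓝 (v * h a)) := by
  suffices Tendsto (fun i ↦ φ i h - φ i 1 * h a) l (𝓝 0) by
    simpa using this.add (h_one.mul_const (h a))
  refine Metric.tendsto_nhds.2 fun ε hε ↦ ?_
  have hδ : 0 < ε / (|v| + 1) := by positivity
  obtain ⟨C, hC⟩ := exists_abs_sub_le_add_mul hd hda h hδ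
  have hbound (i : ι) : |φ i h - φ i 1 * h a| ≤ ε / (|v| + 1) * φ i 1 + C * φ i d := by
    simpa [mul_comm] using abs_positiveFunctional_le (φ i) (u := h - h a • 1)
      (w := (ε / (|v| + 1)) • 1 + C • d) fun x ↦ by simpa using hC x
  have hlim : Tendsto (fun i ↦ ε / (|v| + 1) * φ i 1 + C * φ i d) l (𝓝 (ε / (|v| + 1) * v)) := by
    simpa using (h_one.const_mul (ε / (|v| + 1))).add (h_d.const_mul C)
  have hlt : ε / (|v| + 1) * v < ε := by
    rw [div_mul_eq_mul_div, div_lt_iff₀ (by positivity)]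
    gcongr
    linarith [le_abs_self v]
  filter_upwards [hlim.eventually_lt_const hlt] with i hi
  simpa using (hbound i).trans_lt hi

variable {r : ι → ℝ}

lemma tendsto_mul_positiveFunctional_sq_mul [CompactSpace X] (hda : ∀ x, d x = 0 → x = a)
    (hr : ∀ i, 0 ≤ r i) (h_two : Tendsto (fun i ↦ r i * φ i (d ^ 2)) l (𝓝 v))
    (h_four : Tendsto (fun i ↦ r i * φ i (d ^ 4)) l (𝓝 0)) (h : C(X, ℝ)) :
    Tendsto (fun i ↦ r i * φ i (d ^ 2 * h)) l (𝓝 (v * h a)) := by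
  let ψ (i : ι) : C(X, ℝ) →ₚ[ℝ] ℝ :=
    .mk₀ (r i • (φ i).toLinearMap ∘ₗ LinearMap.mulLeft ℝ (d ^ 2)) fun u hu ↦
      mul_nonneg (hr i) ((φ i).map_nonneg (fun x ↦ mul_nonneg (sq_nonneg (d x)) (hu x)))
  have hψ (i : ι) (u : C(X, ℝ)) : ψ i u = r i * φ i (d ^ 2 * u) := rfl
  simp only [← hψ]
  refine tendsto_positiveFunctional_of_korovkin (d := d ^ 2)
    (fun x ↦ by simpa using sq_nonneg (d x))
    (fun x hx ↦ hda x (pow_eq_zero_iff two_ne_zero |>.1 hx)) ?_ ?_ h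
  · simpa [hψ] using h_two
  · simpa [hψ, ← pow_add] using h_four

lemma tendsto_mul_positiveFunctional_mul_sq (hr : ∀ i, 0 ≤ r i) (h_d : ∀ᶠ i in l, φ i d = 0)
    (h_lim : ∀ h : C(X, ℝ), Tendsto (fun i ↦ φ i h) l (𝓝 (h a)))
    (h_two : Tendsto (fun i ↦ r i * φ i (d ^ 2)) l (𝓝 v)) (q : C(X, ℝ)) :
    Tendsto (fun i ↦ r i * φ i (d * q) ^ 2) l (𝓝 0) := by
  have h_osc := h_lim ((q - q a • 1) ^ 2)
  have h_bound : Tendsto (fun i ↦ r i * φ i (d ^ 2) * φ i ((q - q a • 1) ^ 2)) l (𝓝 0) := by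
    simpa using h_two.mul h_osc
  refine squeeze_zero' (.of_forall fun i ↦ mul_nonneg (hr i) (sq_nonneg _)) ?_ h_bound
  filter_upwards [h_d] with i hi
  have h_center : φ i (d * q) = φ i (d * (q - q a • 1)) := by
    simp [mul_sub, hi]
  rw [h_center, mul_assoc]
  exact mul_le_mul_of_nonneg_left (positiveFunctional_mul_sq_le _ _ _) (hr i)

lemma positiveFunctional_variance_const_add {φ : C(X, ℝ) →ₚ[ℝ] ℝ} (h_one : φ 1 = 1) (c : ℝ)
    (u : C(X, ℝ)) : φ ((c • 1 + u) ^ 2) - φ (c • 1 + u) ^ 2 = φ (u ^ 2) - φ u ^ 2 := by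
  have h_expand : (c • 1 + u) ^ 2 = c ^ 2 • (1 : C(X, ℝ)) + (2 * c) • u + u ^ 2 := by
    ext x
    simp only [ContinuousMap.pow_apply, ContinuousMap.add_apply, ContinuousMap.coe_smul,
      ContinuousMap.coe_one, Pi.smul_apply, Pi.one_apply, smul_eq_mul, mul_one]
    ring
  simp only [h_expand, map_add, map_smul, h_one, smul_eq_mul]
  ring

theorem tendsto_mul_positiveFunctional_variance [CompactSpace X] (hda : ∀ x, d x = 0 → x = a)
    (hr : ∀ i, 0 ≤ r i) (h_one : ∀ i, φ i 1 = 1) (h_d : ∀ᶠ i in l, φ i d = 0)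
    (h_lim : ∀ h : C(X, ℝ), Tendsto (fun i ↦ φ i h) l (𝓝 (h a)))
    (h_two : Tendsto (fun i ↦ r i * φ i (d ^ 2)) l (𝓝 v))
    (h_four : Tendsto (fun i ↦ r i * φ i (d ^ 4)) l (𝓝 0)) {f q : C(X, ℝ)}
    (hfq : ∀ x, f x = f a + d x * q x) :
    Tendsto (fun i ↦ r i * (φ i (f ^ 2) - φ i f ^ 2)) l (𝓝 (v * q a ^ 2)) := by
  have hf : f = f a • 1 + d * q := by ext x; simpa using hfq x
  have h_var (i : ι) : φ i (f ^ 2) - φ i f ^ 2 = φ i (d ^ 2 * q ^ 2) - φ i (d * q) ^ 2 := by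
    rw [hf, positiveFunctional_variance_const_add (h_one i), mul_pow]
  have h_quad := tendsto_mul_positiveFunctional_sq_mul hda hr h_two h_four (q ^ 2)
  have h_cross := tendsto_mul_positiveFunctional_mul_sq hr h_d h_lim h_two q
  simp only [h_var, mul_sub]
  simpa only [sub_zero, ContinuousMap.pow_apply] using h_quad.sub h_cross

end PositiveFunctional

section Bernstein

open scoped unitInterval

/-- Evaluation at `x` of the `n`-th Bernstein approximation, as a positive functional: the
expectation `f ↦ E[f(S/n)]` for a binomial variable `S` with `n` trials and success probability
`x`. -/
noncomputable def bernsteinFunctional (n : ℕ) (x : I) : C(I, ℝ) →ₚ[ℝ] ℝ :=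
  .mk₀
    { toFun f := bernsteinApproximation n f x
      map_add' f g := by simp [bernsteinApproximation.apply, mul_add, Finset.sum_add_distrib]
      map_smul' c f := by
        simp [bernsteinApproximation.apply, Finset.mul_sum, mul_left_comm] }
    fun f hf ↦ by
      simpa [bernsteinApproximation.apply] using
        Finset.sum_nonneg fun ν _ ↦ mul_nonneg bernstein_nonneg (hf _)

lemma bernsteinFunctional_apply (n : ℕ) (x : I) (f : C(I, ℝ)) :
    bernsteinFunctional n x f =
      ∑ ν : Fin (n + 1), bernstein n ν x * f (bernstein.z ν) :=
  bernsteinApproximation.apply n f x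

lemma bernsteinFunctional_one (n : ℕ) (x : I) : bernsteinFunctional n x 1 = 1 := by
  simp [bernsteinFunctional_apply]

lemma tendsto_bernsteinFunctional (x : I) (f : C(I, ℝ)) :
    Tendsto (fun n ↦ bernsteinFunctional n x f) atTop (𝓝 (f x)) :=
  (ContinuousEvalConst.continuous_eval_const x).tendsto f |>.comp (bernsteinApproximation_uniform f)

/-- The function `y ↦ y - x` on the unit interval. -/
def centeredCoord (x : I) : C(I, ℝ) := ⟨fun y ↦ y - x, by fun_prop⟩

lemma centeredCoord_apply (x y : I) : centeredCoord x y = y - x := rfl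

lemma bernsteinFunctional_centeredCoord_pow {n : ℕ} (hn : n ≠ 0) (x : I) (m : ℕ) :
    bernsteinFunctional n x (centeredCoord x ^ m) =
      (binomialCentralMoment ℝ n m).eval (x : ℝ) / n ^ m := by
  simp only [bernsteinFunctional_apply, bernstein_apply, ContinuousMap.pow_apply,
    centeredCoord_apply, binomialCentralMoment, bernsteinPolynomial, Polynomial.eval_finsetSum,
    Finset.sum_range, Finset.sum_div]
  refine Finset.sum_congr rfl fun ν _ ↦ ?_
  have h_scale : (bernstein.z ν - x : ℝ) = (ν - n * x) / n := by
    simp only [bernstein.z]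
    field_simp
  rw [h_scale, div_pow]
  simp only [Polynomial.eval_mul, Polynomial.eval_pow, Polynomial.eval_sub,
    Polynomial.eval_natCast, Polynomial.eval_X, Polynomial.eval_one]
  ring

lemma mul_bernsteinFunctional_centeredCoord_sq {n : ℕ} (hn : n ≠ 0) (x : I) :
    n * bernsteinFunctional n x (centeredCoord x ^ 2) = x * (1 - x) := by
  rw [bernsteinFunctional_centeredCoord_pow hn, binomialCentralMoment_two]
  simp only [Polynomial.eval_mul, Polynomial.eval_natCast, Polynomial.eval_X, Polynomial.eval_sub,
    Polynomial.eval_one]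
  field_simp

lemma tendsto_mul_bernsteinFunctional_centeredCoord_pow_four (x : I) :
    Tendsto (fun n : ℕ ↦ n * bernsteinFunctional n x (centeredCoord x ^ 4)) atTop (𝓝 0) := by
  set p : ℝ := x * (1 - x) with hp
  have h_inv : Tendsto (fun n : ℕ ↦ (n : ℝ)⁻¹) atTop (𝓝 0) := tendsto_inv_atTop_nhds_zero_nat
  have h_lim : Tendsto (fun n : ℕ ↦ 3 * p ^ 2 * (n : ℝ)⁻¹ + p * (1 - 6 * p) * (n : ℝ)⁻¹ ^ 2)
      atTop (𝓝 0) := by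
    simpa using (h_inv.const_mul (3 * p ^ 2)).add ((h_inv.pow 2).const_mul (p * (1 - 6 * p)))
  refine h_lim.congr' ?_
  filter_upwards [eventually_ne_atTop 0] with n hn
  rw [bernsteinFunctional_centeredCoord_pow hn, binomialCentralMoment_four]
  simp only [inv_pow, Polynomial.eval_mul, Polynomial.eval_natCast, Polynomial.eval_X,
    Polynomial.eval_sub, Polynomial.eval_one, ← hp, Polynomial.eval_add, Polynomial.eval_ofNat]
  field_simp
  ring

theorem tendsto_mul_bernsteinFunctional_variance (x : I) {f q : C(I, ℝ)}
    (hfq : ∀ y : I, f y = f x + (y - x) * q y) :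
    Tendsto (fun n : ℕ ↦ n * (bernsteinFunctional n x (f ^ 2) - bernsteinFunctional n x f ^ 2))
      atTop (𝓝 (x * (1 - x) * q x ^ 2)) := by
  refine tendsto_mul_positiveFunctional_variance (d := centeredCoord x)
    (fun y hy ↦ Subtype.ext (sub_eq_zero.1 hy)) (fun n ↦ n.cast_nonneg)
    (fun n ↦ bernsteinFunctional_one n x) ?_ (tendsto_bernsteinFunctional x) ?_
    (tendsto_mul_bernsteinFunctional_centeredCoord_pow_four x) hfq
  · filter_upwards [eventually_ne_atTop 0] with n hn
    simpa [binomialCentralMoment_one] using bernsteinFunctional_centeredCoord_pow hn x 1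
  · refine tendsto_const_nhds.congr' ?_
    filter_upwards [eventually_ne_atTop 0] with n hn
    exact (mul_bernsteinFunctional_centeredCoord_sq hn x).symm

end Bernstein

section DeltaMethod

open Set unitInterval

variable {𝕜 E : Type*} [NontriviallyNormedField 𝕜] [DecidableEq 𝕜] [NormedAddCommGroup E]
  [NormedSpace 𝕜 E]

lemma continuousOn_update_slope {f : 𝕜 → E} {s : Set 𝕜} {a : 𝕜} {f' : E} (hf : ContinuousOn f s)
    (hf' : HasDerivWithinAt f f' s a) : ContinuousOn (Function.update (slope f a) a f') s := by
  refine continuousOn_update_iff.2 ⟨?_, fun _ ↦ hasDerivWithinAt_iff_tendsto_slope.1 hf'⟩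
  have hf_diff : ContinuousOn f (s \ {a}) := hf.mono sdiff_subset
  simp only [slope_fun_def]
  exact (ContinuousOn.inv₀ (by fun_prop) fun y hy ↦ sub_ne_zero.2 hy.2).smul
    (hf_diff.sub continuousOn_const)

lemma eq_add_sub_smul_update_slope (f : 𝕜 → E) (a y : 𝕜) (f' : E) :
    f y = f a + (y - a) • Function.update (slope f a) a f' y := by
  rcases eq_or_ne y a with rfl | hy
  · simp
  · simp [hy, sub_smul_slope]

/-- The expectation `E[f(S/n)]` for a binomial variable `S` with `n` trials and success probability
`x`. -/
noncomputable def binomialExpectation (f : ℝ → ℝ) (n : ℕ) (x : ℝ) : ℝ :=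
  ∑ s ∈ Finset.range (n + 1), (n.choose s : ℝ) * x ^ s * (1 - x) ^ (n - s) * f (s / n)

lemma binomialExpectation_eq_bernsteinFunctional {f : ℝ → ℝ} {F : C(I, ℝ)}
    (hF : ∀ y : I, F y = f y) (n : ℕ) (x : I) :
    binomialExpectation f n x = bernsteinFunctional n x F := by
  simp [binomialExpectation, bernsteinFunctional_apply, bernstein_apply, Finset.sum_range, hF,
    bernstein.z]

variable {f : ℝ → ℝ} {x : ℝ}

theorem tendsto_binomialExpectation (hf : ContinuousOn f I) (hx : x ∈ I) :
    Tendsto (fun n ↦ binomialExpectation f n x) atTop (𝓝 (f x)) := by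
  lift x to I using hx
  let F : C(I, ℝ) := ⟨_, hf.domRestrict⟩
  have hF (y : I) : F y = f y := rfl
  simpa only [binomialExpectation_eq_bernsteinFunctional hF, hF]
    using tendsto_bernsteinFunctional x F

theorem tendsto_mul_binomialVariance {f' : ℝ} (hf : ContinuousOn f I)
    (hf' : HasDerivWithinAt f f' I x) (hx : x ∈ I) :
    Tendsto (fun n : ℕ ↦ n * (binomialExpectation (f ^ 2) n x - binomialExpectation f n x ^ 2))
      atTop (𝓝 (x * (1 - x) * f' ^ 2)) := by
  lift x to I using hx
  let F : C(I, ℝ) := ⟨_, hf.domRestrict⟩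
  let q : C(I, ℝ) := ⟨_, (continuousOn_update_slope hf hf').domRestrict⟩
  have hF (y : I) : F y = f y := rfl
  have hF_sq (y : I) : (F ^ 2) y = (f ^ 2) y := rfl
  have hFq (y : I) : F y = F x + (y - x) * q y := eq_add_sub_smul_update_slope f x y f'
  have hq : q x = f' := Function.update_self ..
  simpa only [binomialExpectation_eq_bernsteinFunctional hF,
    binomialExpectation_eq_bernsteinFunctional hF_sq, hq]
    using tendsto_mul_bernsteinFunctional_variance x hFq

end DeltaMethod

section GMMKernel

open Real

/-- The value `g` of the GMM kernel at correlation `ρ`. -/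
noncomputable def gmmKernel (ρ : ℝ) : ℝ := (1 - √((1 - ρ) / 2)) / (1 + √((1 - ρ) / 2))

/-- The plug-in function `f` that turns a GMM kernel value into the RBF kernel value with parameter
`γ`. -/
noncomputable def rbfOfGMM (γ x : ℝ) : ℝ := exp (-2 * γ * ((1 - x) / (1 + x)) ^ 2)

lemma gmmKernel_mem_Icc {ρ : ℝ} (hρ : -1 ≤ ρ) : gmmKernel ρ ∈ Set.Icc 0 1 := by
  have h_nonneg : 0 ≤ √((1 - ρ) / 2) := sqrt_nonneg _
  have h_le_one : √((1 - ρ) / 2) ≤ 1 := sqrt_le_one.2 (by linarith)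
  exact ⟨div_nonneg (by linarith) (by linarith), (div_le_one (by linarith)).2 (by linarith)⟩

lemma one_sub_div_one_add_gmmKernel (ρ : ℝ) :
    (1 - gmmKernel ρ) / (1 + gmmKernel ρ) = √((1 - ρ) / 2) := by
  rw [gmmKernel]
  field_simp
  ring

lemma rbfOfGMM_gmmKernel {ρ : ℝ} (hρ : ρ ≤ 1) (γ : ℝ) :
    rbfOfGMM γ (gmmKernel ρ) = exp (-γ * (1 - ρ)) := by
  rw [rbfOfGMM, one_sub_div_one_add_gmmKernel, sq_sqrt (by linarith)]
  ring_nf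

lemma hasDerivAt_rbfOfGMM (γ : ℝ) {x : ℝ} (hx : 1 + x ≠ 0) :
    HasDerivAt (rbfOfGMM γ) (rbfOfGMM γ x * (8 * γ * (1 - x) / (1 + x) ^ 3)) x := by
  have h_mobius : HasDerivAt (fun y : ℝ ↦ (1 - y) / (1 + y)) (-2 / (1 + x) ^ 2) x := by
    convert! ((hasDerivAt_id' x).const_sub 1).fun_div ((hasDerivAt_id' x).const_add 1) hx using 1
    ring
  convert! ((h_mobius.fun_pow 2).const_mul (-2 * γ)).exp using 1
  simp only [rbfOfGMM, Nat.cast_ofNat, Nat.add_one_sub_one, pow_one]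
  field_simp
  ring

lemma continuousOn_rbfOfGMM (γ : ℝ) : ContinuousOn (rbfOfGMM γ) (Set.Icc 0 1) := fun x hx ↦
  (hasDerivAt_rbfOfGMM γ (by linarith [hx.1])).continuousAt.continuousWithinAt

end GMMKernel

theorem stmt_18_general (ρ γ : ℝ) (hρ : ρ ∈ Set.Icc (-1 : ℝ) 1)
    (g : ℝ) (hg : g = (1 - Real.sqrt ((1 - ρ) / 2)) / (1 + Real.sqrt ((1 - ρ) / 2)))
    (f : ℝ → ℝ) (hf : ∀ x, f x = Real.exp (-2 * γ * ((1 - x) / (1 + x)) ^ 2))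
    (E E2 : ℕ → ℝ)
    (hE : ∀ k : ℕ, E k = ∑ s ∈ Finset.range (k + 1),
      (k.choose s : ℝ) * g ^ s * (1 - g) ^ (k - s) * f ((s : ℝ) / k))
    (hE2 : ∀ k : ℕ, E2 k = ∑ s ∈ Finset.range (k + 1),
      (k.choose s : ℝ) * g ^ s * (1 - g) ^ (k - s) * f ((s : ℝ) / k) ^ 2) :
    Tendsto E atTop (𝓝 (Real.exp (-γ * (1 - ρ)))) ∧
    Tendsto (fun k : ℕ => (k : ℝ) * (E2 k - E k ^ 2)) atTop
      (𝓝 (Real.exp (-2 * γ * (1 - ρ)) * 64 * γ ^ 2 * (g * (1 - g) ^ 3 / (1 + g) ^ 6))) := by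
  obtain rfl : g = gmmKernel ρ := hg
  obtain rfl : f = rbfOfGMM γ := funext hf
  obtain rfl : E = fun k ↦ binomialExpectation (rbfOfGMM γ) k (gmmKernel ρ) := funext hE
  obtain rfl : E2 = fun k ↦ binomialExpectation (rbfOfGMM γ ^ 2) k (gmmKernel ρ) :=
    funext fun k ↦ by simp only [hE2 k, binomialExpectation, Pi.pow_apply]
  have hg := gmmKernel_mem_Icc hρ.1
  have h_cont := continuousOn_rbfOfGMM γ
  have h_ne : 1 + gmmKernel ρ ≠ 0 := by linarith [hg.1]
  have h_deriv := (hasDerivAt_rbfOfGMM γ h_ne).hasDerivWithinAt (s := Set.Icc 0 1)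
  rw [rbfOfGMM_gmmKernel hρ.2] at h_deriv
  refine ⟨rbfOfGMM_gmmKernel hρ.2 γ ▸ tendsto_binomialExpectation h_cont hg, ?_⟩
  convert tendsto_mul_binomialVariance h_cont h_deriv hg using 2
  have h_exp : Real.exp (-2 * γ * (1 - ρ)) = Real.exp (-γ * (1 - ρ)) ^ 2 := by
    rw [← Real.exp_nat_mul]
    ring_nf
  rw [h_exp]
  field_simp
  ring

/-- **Theorem 4 (delta-method form).** For `ρ ∈ (-1,1)`, `γ > 0`,
`g = (1 - √((1-ρ)/2))/(1 + √((1-ρ)/2))`, `S_k ~ binomial(k, g)`, `X̄_k = S_k/k` and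
`f(x) = exp(-2γ((1-x)/(1+x))²)`: `E[f(X̄_k)] → e^{-γ(1-ρ)}` and
`k · Var(f(X̄_k)) → V_{g,γ} = e^{-2γ(1-ρ)} · 64γ² · g(1-g)³/(1+g)⁶` as `k → ∞`. -/
theorem stmt_18 (ρ γ : ℝ) (hρ : ρ ∈ Set.Ioo (-1 : ℝ) 1) (hγ : 0 < γ)
    (g : ℝ) (hg : g = (1 - Real.sqrt ((1 - ρ) / 2)) / (1 + Real.sqrt ((1 - ρ) / 2)))
    (f : ℝ → ℝ) (hf : ∀ x, f x = Real.exp (-2 * γ * ((1 - x) / (1 + x)) ^ 2))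
    (E E2 : ℕ → ℝ)
    (hE : ∀ k : ℕ, E k = ∑ s ∈ Finset.range (k + 1),
      (k.choose s : ℝ) * g ^ s * (1 - g) ^ (k - s) * f ((s : ℝ) / k))
    (hE2 : ∀ k : ℕ, E2 k = ∑ s ∈ Finset.range (k + 1),
      (k.choose s : ℝ) * g ^ s * (1 - g) ^ (k - s) * f ((s : ℝ) / k) ^ 2) :
    Tendsto E atTop (𝓝 (Real.exp (-γ * (1 - ρ)))) ∧
    Tendsto (fun k : ℕ => (k : ℝ) * (E2 k - E k ^ 2)) atTop
      (𝓝 (Real.exp (-2 * γ * (1 - ρ)) * 64 * γ ^ 2 * (g * (1 - g) ^ 3 / (1 + g) ^ 6))) :=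
  stmt_18_general ρ γ (Set.Ioo_subset_Icc_self hρ) g hg f hf E E2 hE hE2
end
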